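/- arXiv:2310.17735 — 2 statements merged into one kernel-verified Lean document; each statement's English description precedes it below -/
import Mathlib

section
/- Let X and A be finite nonempty sets, let P ∈ M_{X×X} be an orthogonal projection of rank k ≥ 1, and let Q ∈ M_{A×A} be an orthogonal projection. Define ω_qc(P ⇒ Q) = sup_{Γ∈Q_qc} (1/k) Tr(Γ(P) Q), where Q_qc is the set of quantum commuting QNS correlations over the quadruple (X, X, A, A). Then ω_qc(P ⇒ Q) = 1 if and only if there exists Γ ∈ Q_qc such that for every σ ∈ M_{X×X} with σ = P σ P one has Γ(σ) = Q Γ(σ) Q. -/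
open Matrix ContinuousLinearMap
open scoped Kronecker ComplexOrder ComplexInnerProductSpace

/-- A bundled complex Hilbert space. -/
structure HilbertC : Type 1 where
  carrier : Type
  [nacg : NormedAddCommGroup carrier]
  [ips : InnerProductSpace ℂ carrier]
  [cs : CompleteSpace carrier]

attribute [instance] HilbertC.nacg HilbertC.ips HilbertC.cs

/-- A stochastic operator matrix over `(X, A)` acting on a Hilbert space `H`. -/
def IsStochasticOperatorMatrix {X A : Type*} [Fintype X] [Fintype A] [DecidableEq X]
    {H : Type*} [NormedAddCommGroup H] [InnerProductSpace ℂ H]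
    (E : X → X → A → A → (H →L[ℂ] H)) : Prop :=
  (∀ ξ : X × A → H,
    0 ≤ ∑ p : X × A, ∑ q : X × A, (⟪ξ p, (E p.1 q.1 p.2 q.2) (ξ q)⟫ : ℂ)) ∧
  (∀ x x' : X, ∑ a : A, E x x' a a = if x = x' then 1 else 0)

/-- Quantum commuting QNS correlations over `(X, Y, A, B)`. -/
def IsQCCorrelation {X Y A B : Type} [Fintype X] [Fintype Y] [Fintype A] [Fintype B]
    [DecidableEq X] [DecidableEq Y]
    (Γ : Matrix (X × Y) (X × Y) ℂ →ₗ[ℂ] Matrix (A × B) (A × B) ℂ) : Prop :=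
  ∃ (ℍ : HilbertC) (ξ : ℍ.carrier)
    (E : X → X → A → A → (ℍ.carrier →L[ℂ] ℍ.carrier))
    (F : Y → Y → B → B → (ℍ.carrier →L[ℂ] ℍ.carrier)),
    ‖ξ‖ = 1 ∧
    IsStochasticOperatorMatrix E ∧ IsStochasticOperatorMatrix F ∧
    (∀ (x x' : X) (y y' : Y) (a a' : A) (b b' : B),
      Commute (E x x' a a') (F y y' b b')) ∧
    (∀ (x x' : X) (y y' : Y),
      Γ ((Matrix.single x x' (1 : ℂ)) ⊗ₖ (Matrix.single y y' (1 : ℂ)))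
        = Matrix.of fun p q => (⟪ξ, ((E x x' p.1 q.1) ∘L (F y y' p.2 q.2)) ξ⟫ : ℂ))

/-!
The supremum is attained: along an ultrafilter of correlations, the underlying Hilbert spaces, unit
vectors and operator matrices (whose entries are contractions) have an ultraproduct, which again
realises a quantum commuting correlation, namely the limit. Hence the value is `1` exactly when some
correlation `Γ` satisfies `Tr (Γ(P) Q) = k = Tr P`.

Every such `Γ` preserves traces and positivity. For positivity, the Choi matrix of `Γ` is positive
because the block operator of `E ⊗ F` is the product of the commuting positive operators `E ⊗ 1` and
`1 ⊗ F`. So `Tr (Γ(P) Q) = Tr P` says that the positive matrix `(1 - Q) Γ(P) (1 - Q)` has trace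
zero, that is, vanishes. For positive `x` one has `0 ≤ P x P ≤ ‖x‖ P`, so `Γ(P x P)` is dominated by
a multiple of `Γ(P)` and is supported on `Q` as well; by linearity this holds for all `x`.
-/

section PositiveMaps

lemma trace_eq_rank_of_isIdempotentElem {n K : Type*} [Fintype n] [Field K] {P : Matrix n n K}
    (hP : IsIdempotentElem P) : P.trace = P.rank := by
  classical
  have hproj : LinearMap.IsProj (LinearMap.range (toLin' P)) (toLin' P) :=
    LinearMap.IsIdempotentElem.isProj_range _ (hP.map toLinAlgEquiv')
  rw [← trace_toLin'_eq, hproj.trace, toLin'_apply', rank]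

section CStarAlgebra

variable {A B : Type*} [CStarAlgebra A] [PartialOrder A] [StarOrderedRing A]
  [CStarAlgebra B] [PartialOrder B] [StarOrderedRing B]

lemma mul_eq_zero_of_star_mul_mul_eq_zero {a r : A} (ha : 0 ≤ a) (h : star r * a * r = 0) :
    a * r = 0 := by
  obtain ⟨c, rfl⟩ := CStarAlgebra.nonneg_iff_eq_star_mul_self.1 ha
  have hcr : c * r = 0 := by
    rw [← CStarRing.star_mul_self_eq_zero_iff, star_mul, ← h]
    simp only [mul_assoc]
  rw [mul_assoc, hcr, mul_zero]

lemma eq_compression_of_nonneg_of_le {a b q : A} (hq : IsStarProjection q) (ha : 0 ≤ a)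
    (hab : a ≤ b) (hb : (1 - q) * b * (1 - q) = 0) : a = q * a * q := by
  have hstar : star (1 - q) = 1 - q := hq.one_sub.isSelfAdjoint.star_eq
  have hcorner : star (1 - q) * a * (1 - q) = 0 := by
    refine le_antisymm ?_ (star_left_conjugate_nonneg ha _)
    calc star (1 - q) * a * (1 - q) ≤ star (1 - q) * b * (1 - q) :=
          star_left_conjugate_le_conjugate hab _
      _ = 0 := by rw [hstar, hb]
  have haq : a = a * q := by
    simpa only [mul_sub, mul_one, sub_eq_zero] using mul_eq_zero_of_star_mul_mul_eq_zero ha hcorner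
  have hqa : a = q * a := by
    simpa only [star_mul, (IsSelfAdjoint.of_nonneg ha).star_eq, hq.isSelfAdjoint.star_eq]
      using congrArg star haq
  rw [← hqa, ← haq]

/- By linearity `x` may be taken positive, and then `0 ≤ p * x * p ≤ ‖x‖ • p`. -/
lemma map_compression_eq_compression {p : A} {q : B} (Γ : A →ₚ[ℂ] B) (hp : IsStarProjection p)
    (hq : IsStarProjection q) (h : (1 - q) * Γ p * (1 - q) = 0) (x : A) :
    Γ (p * x * p) = q * Γ (p * x * p) * q := by
  have hx : x ∈ Submodule.span ℂ {a : A | 0 ≤ a} := by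
    rw [CStarAlgebra.span_nonneg]
    exact Submodule.mem_top
  induction hx using Submodule.span_induction with
  | zero => simp
  | add x y _ _ hx hy => simpa only [mul_add, add_mul, map_add] using congrArg₂ (· + ·) hx hy
  | smul c x _ hx =>
    simpa only [mul_smul_comm, smul_mul_assoc, map_smul] using congrArg (c • ·) hx
  | mem x hx =>
    have hx : 0 ≤ x := hx
    have hpos : 0 ≤ p * x * p := hp.isSelfAdjoint.conjugate_nonneg hx
    have hle : p * x * p ≤ (‖x‖ : ℂ) • p := by
      have := CStarAlgebra.star_left_conjugate_le_norm_smul (a := p) (b := x)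
      rwa [hp.isSelfAdjoint.star_eq, hp.isIdempotentElem.eq] at this
    refine eq_compression_of_nonneg_of_le hq (map_nonneg Γ hpos) (OrderHomClass.mono Γ hle) ?_
    rw [map_smul, mul_smul_comm, smul_mul_assoc, h, smul_zero]

end CStarAlgebra

variable {m n : Type*} [Fintype m] [Fintype n]

lemma trace_one_sub_mul_mul_one_sub [DecidableEq n] {R : Type*} [CommRing R]
    {Q : Matrix n n R} (hQ : IsIdempotentElem Q) (M : Matrix n n R) :
    ((1 - Q) * M * (1 - Q)).trace = M.trace - (M * Q).trace := by
  rw [trace_mul_comm, ← mul_assoc, hQ.one_sub.eq, sub_mul, one_mul, trace_sub, trace_mul_comm Q]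

lemma posSemidef_one_sub_mul_mul_one_sub [DecidableEq n] {Q M : Matrix n n ℂ}
    (hQ : IsStarProjection Q) (hM : M.PosSemidef) : ((1 - Q) * M * (1 - Q)).PosSemidef := by
  have h := hM.conjTranspose_mul_mul_same (1 - Q)
  rwa [← star_eq_conjTranspose, hQ.one_sub.isSelfAdjoint.star_eq] at h

lemma trace_mul_le_trace {Q M : Matrix n n ℂ} (hQ : IsStarProjection Q) (hM : M.PosSemidef) :
    (M * Q).trace ≤ M.trace := by
  classical
  rw [← sub_nonneg, ← trace_one_sub_mul_mul_one_sub hQ.isIdempotentElem]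
  exact (posSemidef_one_sub_mul_mul_one_sub hQ hM).trace_nonneg

lemma posSemidef_of_isStarProjection {P : Matrix m m ℂ} (hP : IsStarProjection P) :
    P.PosSemidef := by
  have h := posSemidef_conjTranspose_mul_self P
  rwa [← star_eq_conjTranspose, hP.isSelfAdjoint.star_eq, hP.isIdempotentElem.eq] at h

open scoped MatrixOrder Matrix.Norms.L2Operator in
lemma trace_map_mul_eq_trace_iff {P : Matrix m m ℂ} {Q : Matrix n n ℂ}
    {Γ : Matrix m m ℂ →ₗ[ℂ] Matrix n n ℂ} (hpos : ∀ ρ, ρ.PosSemidef → (Γ ρ).PosSemidef)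
    (htrace : ∀ σ, (Γ σ).trace = σ.trace) (hP : IsStarProjection P) (hQ : IsStarProjection Q) :
    (Γ P * Q).trace = P.trace ↔ ∀ σ, σ = P * σ * P → Γ σ = Q * Γ σ * Q := by
  classical
  constructor
  · intro h σ hσ
    have hcorner : (1 - Q) * Γ P * (1 - Q) = 0 := by
      rw [← (posSemidef_one_sub_mul_mul_one_sub hQ
        (hpos P (posSemidef_of_isStarProjection hP))).trace_eq_zero_iff,
        trace_one_sub_mul_mul_one_sub hQ.isIdempotentElem, htrace, h, sub_self]
    let Γpos : Matrix m m ℂ →ₚ[ℂ] Matrix n n ℂ := .mk₀ Γ fun ρ hρ =>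
      (hpos ρ hρ.posSemidef).nonneg
    rw [hσ]
    exact map_compression_eq_compression Γpos hP hQ hcorner σ
  · intro h
    have hΓP : Γ P = Q * Γ P * Q := h P (by simp only [hP.isIdempotentElem.eq])
    rw [← htrace P, hΓP, mul_assoc, hQ.isIdempotentElem.eq]

end PositiveMaps

section ChoiMatrix

variable {m n : Type*} [DecidableEq m]

/-- The Choi matrix of a linear map `Γ` between matrix algebras: its block at `(i, j)` is the image
of the matrix unit at `(i, j)`. -/
def choiMatrix {R : Type*} [CommSemiring R] (Γ : Matrix m m R →ₗ[R] Matrix n n R) :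
    Matrix (m × n) (m × n) R :=
  of fun p q => Γ (single p.1 q.1 1) p.2 q.2

lemma choiMatrix_apply {R : Type*} [CommSemiring R] (Γ : Matrix m m R →ₗ[R] Matrix n n R)
    (p q : m × n) : choiMatrix Γ p q = Γ (single p.1 q.1 1) p.2 q.2 :=
  rfl

lemma map_apply_eq_sum_mul_choiMatrix [Fintype m] {R : Type*} [CommSemiring R]
    (Γ : Matrix m m R →ₗ[R] Matrix n n R) (ρ : Matrix m m R) (a b : n) :
    Γ ρ a b = ∑ i, ∑ j, ρ i j * choiMatrix Γ (i, a) (j, b) := by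
  conv_lhs => rw [matrix_eq_sum_single ρ]
  have hsingle (i j : m) : single i j (ρ i j) = ρ i j • single i j 1 := by
    rw [smul_single, smul_eq_mul, mul_one]
  simp only [hsingle, map_sum, map_smul, Matrix.sum_apply, Matrix.smul_apply, smul_eq_mul,
    choiMatrix_apply]

/- `Γ ρ` is a compression of the Schur product of `ρ ⊗ J` with the Choi matrix, where `J` is the
all-ones matrix. -/
lemma posSemidef_map_of_posSemidef_choiMatrix {𝕜 : Type*} [RCLike 𝕜] [Finite m] [Finite n]
    {Γ : Matrix m m 𝕜 →ₗ[𝕜] Matrix n n 𝕜} (hΓ : (choiMatrix Γ).PosSemidef)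
    {ρ : Matrix m m 𝕜} (hρ : ρ.PosSemidef) : (Γ ρ).PosSemidef := by
  classical
  have := Fintype.ofFinite m
  have := Fintype.ofFinite n
  let V : Matrix (m × n) n 𝕜 := of fun p a => if p.2 = a then 1 else 0
  have hΓρ : Γ ρ = Vᴴ * (ρ.submatrix Prod.fst Prod.fst ⊙ choiMatrix Γ) * V := by
    ext a b
    rw [map_apply_eq_sum_mul_choiMatrix, Finset.sum_comm]
    simp [V, mul_apply, Fintype.sum_prod_type]
  rw [hΓρ]
  exact ((hρ.submatrix _).hadamard hΓ).conjTranspose_mul_mul_same V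

end ChoiMatrix

section PositiveOperators

lemma isPositive_mul_of_commute {K : Type*} [NormedAddCommGroup K] [InnerProductSpace ℂ K]
    [CompleteSpace K] {S T : K →L[ℂ] K} (hS : S.IsPositive) (hT : T.IsPositive)
    (hST : Commute S T) : (S * T).IsPositive := by
  rw [← nonneg_iff_isPositive] at hS hT ⊢
  exact hST.mul_nonneg hS hT

lemma isPositive_iff_forall_inner_nonneg {K : Type*} [NormedAddCommGroup K]
    [InnerProductSpace ℂ K] (T : K →L[ℂ] K) : T.IsPositive ↔ ∀ v, 0 ≤ ⟪v, T v⟫ := by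
  refine ⟨fun hT => hT.inner_nonneg_right, fun h => (isPositive_iff_complex T).2 fun v => ?_⟩
  obtain ⟨hre, him⟩ := RCLike.nonneg_iff.1 (h v)
  rw [← inner_conj_symm, RCLike.conj_eq_iff_im.2 him]
  exact ⟨RCLike.conj_eq_iff_re.1 (RCLike.conj_eq_iff_im.2 him), hre⟩

lemma two_mul_re_inner_le_of_isPositive {𝕜 K : Type*} [RCLike 𝕜] [NormedAddCommGroup K]
    [InnerProductSpace 𝕜 K] {T : K →L[𝕜] K} (hT : T.IsPositive) (u v : K) :
    2 * RCLike.re (inner 𝕜 u (T v)) ≤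
      RCLike.re (inner 𝕜 u (T u)) + RCLike.re (inner 𝕜 v (T v)) := by
  have hsymm : RCLike.re (inner 𝕜 v (T u)) = RCLike.re (inner 𝕜 u (T v)) := by
    rw [← hT.inner_left_eq_inner_right, inner_re_symm]
  have h := hT.re_inner_nonneg_right (u - v)
  rw [map_sub, inner_sub_left, inner_sub_right, inner_sub_right, map_sub, map_sub, map_sub,
    hsymm] at h
  linarith

lemma posSemidef_of_inner_isPositive {K n : Type*} [Finite n] [NormedAddCommGroup K]
    [InnerProductSpace ℂ K] {T : K →L[ℂ] K} (hT : T.IsPositive) (e : n → K) :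
    (of fun p q => ⟪e p, T (e q)⟫).PosSemidef := by
  have := Fintype.ofFinite n
  refine .of_dotProduct_mulVec_nonneg ?_ fun x => ?_
  · ext p q
    simp [conjTranspose_apply, hT.inner_left_eq_inner_right]
  · have h := hT.inner_nonneg_right (∑ p, x p • e p)
    rw [map_sum, sum_inner] at h
    simp only [map_smul, inner_sum, inner_smul_left, inner_smul_right] at h
    simpa only [dotProduct, mulVec, Finset.mul_sum, of_apply, Pi.star_apply, RCLike.star_def,
      mul_comm (x _), mul_assoc] using h

end PositiveOperators

section BlockOperator

variable {ι κ H : Type*} [Fintype ι] [Fintype κ]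
  [NormedAddCommGroup H] [InnerProductSpace ℂ H]

/-- The operator on the direct sum of copies of `H` indexed by `ι` whose matrix of blocks is `M`. -/
noncomputable def blockOperator (M : Matrix ι ι (H →L[ℂ] H)) :
    PiLp 2 (fun _ : ι => H) →L[ℂ] PiLp 2 (fun _ : ι => H) :=
  (PiLp.continuousLinearEquiv 2 ℂ fun _ : ι => H).symm ∘L
    ContinuousLinearMap.pi (fun i => ∑ j, M i j ∘L PiLp.proj 2 (fun _ : ι => H) j)

lemma blockOperator_apply (M : Matrix ι ι (H →L[ℂ] H)) (v : PiLp 2 (fun _ : ι => H)) (i : ι) :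
    blockOperator M v i = ∑ j, M i j (v j) := by
  simp [blockOperator]

lemma inner_blockOperator (M : Matrix ι ι (H →L[ℂ] H)) (v w : PiLp 2 (fun _ : ι => H)) :
    ⟪v, blockOperator M w⟫ = ∑ i, ∑ j, ⟪v i, M i j (w j)⟫ := by
  simp only [PiLp.inner_apply, blockOperator_apply, inner_sum]

lemma blockOperator_mul (M N : Matrix ι ι (H →L[ℂ] H)) :
    blockOperator (M * N) = blockOperator M * blockOperator N := by
  ext v i
  simp only [mul_apply_eq_comp, blockOperator_apply,
    Matrix.mul_apply, _root_.sum_apply, map_sum]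
  exact Finset.sum_comm

lemma inner_single_blockOperator_single [DecidableEq ι] (M : Matrix ι ι (H →L[ℂ] H)) (i j : ι)
    (u v : H) :
    ⟪PiLp.single 2 i u, blockOperator M (PiLp.single 2 j v)⟫ = ⟪u, M i j v⟫ := by
  rw [inner_blockOperator, Finset.sum_eq_single i, Finset.sum_eq_single j] <;> simp +contextual

lemma isPositive_blockOperator_iff (M : Matrix ι ι (H →L[ℂ] H)) :
    (blockOperator M).IsPositive ↔ ∀ v : ι → H, 0 ≤ ∑ i, ∑ j, ⟪v i, M i j (v j)⟫ := by
  simp only [isPositive_iff_forall_inner_nonneg, inner_blockOperator]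
  exact ⟨fun h v => h (WithLp.toLp 2 v), fun h v => h v⟩

lemma isPositive_blockOperator_kronecker_one [DecidableEq κ] {M : Matrix ι ι (H →L[ℂ] H)}
    (hM : (blockOperator M).IsPositive) :
    (blockOperator (M ⊗ₖ (1 : Matrix κ κ (H →L[ℂ] H)))).IsPositive := by
  rw [isPositive_blockOperator_iff] at hM ⊢
  intro v
  have hform : ∑ p : ι × κ, ∑ q : ι × κ, ⟪v p, (M ⊗ₖ (1 : Matrix κ κ (H →L[ℂ] H))) p q (v q)⟫ =
      ∑ k, ∑ i, ∑ j, ⟪v (i, k), M i j (v (j, k))⟫ := by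
    rw [Fintype.sum_prod_type_right]
    simp [Fintype.sum_prod_type, one_apply, apply_ite, ite_apply]
  rw [hform]
  exact Finset.sum_nonneg fun k _ => hM fun i => v (i, k)

lemma isPositive_blockOperator_one_kronecker [DecidableEq ι] {N : Matrix κ κ (H →L[ℂ] H)}
    (hN : (blockOperator N).IsPositive) :
    (blockOperator ((1 : Matrix ι ι (H →L[ℂ] H)) ⊗ₖ N)).IsPositive := by
  rw [isPositive_blockOperator_iff] at hN ⊢
  intro v
  have hform : ∑ p : ι × κ, ∑ q : ι × κ, ⟪v p, ((1 : Matrix ι ι (H →L[ℂ] H)) ⊗ₖ N) p q (v q)⟫ =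
      ∑ i, ∑ k, ∑ l, ⟪v (i, k), N k l (v (i, l))⟫ := by
    simp [Fintype.sum_prod_type, one_apply, apply_ite, ite_apply]
  rw [hform]
  exact Finset.sum_nonneg fun i _ => hN fun k => v (i, k)

lemma isPositive_blockOperator_kronecker [CompleteSpace H] {M : Matrix ι ι (H →L[ℂ] H)}
    {N : Matrix κ κ (H →L[ℂ] H)} (hM : (blockOperator M).IsPositive)
    (hN : (blockOperator N).IsPositive) (hcomm : ∀ i j k l, Commute (M i j) (N k l)) :
    (blockOperator (M ⊗ₖ N)).IsPositive := by
  classical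
  have hMN : M ⊗ₖ N = M ⊗ₖ (1 : Matrix κ κ (H →L[ℂ] H)) * (1 : Matrix ι ι (H →L[ℂ] H)) ⊗ₖ N := by
    ext1 p q
    simp [Matrix.mul_apply, Fintype.sum_prod_type, one_apply]
  have hNM : M ⊗ₖ N = (1 : Matrix ι ι (H →L[ℂ] H)) ⊗ₖ N * M ⊗ₖ (1 : Matrix κ κ (H →L[ℂ] H)) := by
    ext1 p q
    simp [Matrix.mul_apply, Fintype.sum_prod_type, one_apply, (hcomm p.1 q.1 p.2 q.2).eq]
  rw [hMN, blockOperator_mul]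
  refine isPositive_mul_of_commute (isPositive_blockOperator_kronecker_one hM)
    (isPositive_blockOperator_one_kronecker hN) ?_
  rw [commute_iff_eq, ← blockOperator_mul, ← blockOperator_mul, ← hMN, ← hNM]

lemma norm_le_one_of_isPositive_blockOperator {M : Matrix ι ι (H →L[ℂ] H)}
    (hM : (blockOperator M).IsPositive) (hdiag : ∀ i, M i i ≤ 1) (i j : ι) : ‖M i j‖ ≤ 1 := by
  classical
  have hquad (l : ι) (u : H) : RCLike.re ⟪u, M l l u⟫ ≤ ‖u‖ ^ 2 := by
    have h := ((le_def _ _).1 (hdiag l)).re_inner_nonneg_right u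
    rwa [_root_.sub_apply, inner_sub_right, map_sub, one_apply_eq_self, inner_self_eq_norm_sq,
      sub_nonneg] at h
  refine opNorm_le_bound _ zero_le_one fun v => ?_
  have h := two_mul_re_inner_le_of_isPositive hM (PiLp.single 2 i (M i j v)) (PiLp.single 2 j v)
  simp only [inner_single_blockOperator_single, inner_self_eq_norm_sq] at h
  rw [one_mul, ← sq_le_sq₀ (norm_nonneg _) (norm_nonneg _)]
  linarith [hquad i (M i j v), hquad j v]

end BlockOperator

section Ultraproduct

open Filter Topology UniformSpace
open scoped lp ENNReal

variable {ι : Type*}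

lemma tendsto_limUnder_of_isBounded_range {α : Type*} [Nonempty α] [PseudoMetricSpace α]
    [ProperSpace α] (U : Ultrafilter ι) {f : ι → α} (hf : Bornology.IsBounded (Set.range f)) :
    Tendsto f U (𝓝 (limUnder (U : Filter ι) f)) := by
  have hmem : closure (Set.range f) ∈ U.map f :=
    mem_map.2 (univ_mem' fun i => subset_closure (Set.mem_range_self i))
  obtain ⟨a, -, ha⟩ := hf.isCompact_closure.ultrafilter_le_nhds' (U.map f) hmem
  exact tendsto_nhds_limUnder ⟨a, ha⟩

/-- The bounded families in `∏ i, H i`. This type synonym of `lp H ∞` forgets the supremum norm in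
favour of the seminorm given by the limit of `‖x i‖` along the ultrafilter. -/
def BoundedFamily (_U : Ultrafilter ι) (H : ι → Type*) [∀ i, NormedAddCommGroup (H i)] : Type _ :=
  lp H ∞

namespace BoundedFamily

variable {U : Ultrafilter ι} {H : ι → Type*} [∀ i, NormedAddCommGroup (H i)]

instance : CoeFun (BoundedFamily U H) fun _ => ∀ i, H i := ⟨fun x => Subtype.val x⟩

noncomputable instance : AddCommGroup (BoundedFamily U H) := inferInstanceAs (AddCommGroup (lp H ∞))

@[ext]
lemma ext {x y : BoundedFamily U H} (h : ∀ i, x i = y i) : x = y := lp.ext (funext h)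

lemma neg_apply (x : BoundedFamily U H) (i : ι) : (-x) i = -x i := rfl

lemma zero_apply (i : ι) : (0 : BoundedFamily U H) i = 0 := rfl

lemma exists_forall_norm_apply_le (x : BoundedFamily U H) : ∃ C, ∀ i, ‖x i‖ ≤ C :=
  ⟨_, lp.norm_apply_le_norm ENNReal.top_ne_zero (show lp H ∞ from x)⟩

lemma tendsto_limUnder_norm (x : BoundedFamily U H) :
    Tendsto (fun i => ‖x i‖) U (𝓝 (limUnder (U : Filter ι) fun i => ‖x i‖)) := by
  obtain ⟨C, hC⟩ := x.exists_forall_norm_apply_le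
  refine tendsto_limUnder_of_isBounded_range U (isBounded_iff_forall_norm_le.2 ⟨C, ?_⟩)
  rintro _ ⟨i, rfl⟩
  rw [norm_norm]
  exact hC i

noncomputable instance : SeminormedAddCommGroup (BoundedFamily U H) :=
  AddGroupSeminorm.toSeminormedAddCommGroup
    { toFun := fun x => limUnder (U : Filter ι) fun i => ‖x i‖
      map_zero' := (tendsto_const_nhds.congr fun i => by rw [zero_apply, norm_zero]).limUnder_eq
      add_le' := fun x y => le_of_tendsto_of_tendsto' (x + y).tendsto_limUnder_norm
        (x.tendsto_limUnder_norm.add y.tendsto_limUnder_norm) fun i => norm_add_le (x i) (y i)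
      neg' := fun x => by simp only [neg_apply, norm_neg] }

lemma tendsto_norm (x : BoundedFamily U H) : Tendsto (fun i => ‖x i‖) U (𝓝 ‖x‖) :=
  x.tendsto_limUnder_norm

section InnerProductSpace

variable {𝕜 : Type*} [RCLike 𝕜] [∀ i, InnerProductSpace 𝕜 (H i)]

noncomputable instance : Module 𝕜 (BoundedFamily U H) := inferInstanceAs (Module 𝕜 (lp H ∞))

lemma tendsto_limUnder_inner (x y : BoundedFamily U H) :
    Tendsto (fun i => inner 𝕜 (x i) (y i)) U
      (𝓝 (limUnder (U : Filter ι) fun i => inner 𝕜 (x i) (y i))) := by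
  obtain ⟨C, hC⟩ := x.exists_forall_norm_apply_le
  obtain ⟨D, hD⟩ := y.exists_forall_norm_apply_le
  refine tendsto_limUnder_of_isBounded_range U (isBounded_iff_forall_norm_le.2 ⟨C * D, ?_⟩)
  rintro _ ⟨i, rfl⟩
  have hC0 : 0 ≤ C := (norm_nonneg _).trans (hC i)
  exact (norm_inner_le_norm _ _).trans (mul_le_mul (hC i) (hD i) (norm_nonneg _) hC0)

noncomputable instance : InnerProductSpace 𝕜 (BoundedFamily U H) where
  norm_smul_le c x := le_of_tendsto_of_tendsto' (c • x).tendsto_norm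
    (x.tendsto_norm.const_mul ‖c‖) fun i => norm_smul_le c (x i)
  inner x y := limUnder (U : Filter ι) fun i => inner 𝕜 (x i) (y i)
  norm_sq_eq_re_inner x := tendsto_nhds_unique (x.tendsto_norm.pow 2)
    (((RCLike.continuous_re.tendsto _).comp (x.tendsto_limUnder_inner x)).congr fun i =>
      inner_self_eq_norm_sq (𝕜 := 𝕜) (x i))
  conj_inner_symm x y := tendsto_nhds_unique
    (((RCLike.continuous_conj.tendsto _).comp (y.tendsto_limUnder_inner x)).congr fun i =>
      inner_conj_symm (x i) (y i)) (x.tendsto_limUnder_inner y)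
  add_left x y z := tendsto_nhds_unique ((x + y).tendsto_limUnder_inner z)
    (((x.tendsto_limUnder_inner z).add (y.tendsto_limUnder_inner z)).congr fun i =>
      (inner_add_left (x i) (y i) (z i)).symm)
  smul_left x y c := tendsto_nhds_unique ((c • x).tendsto_limUnder_inner y)
    (((x.tendsto_limUnder_inner y).const_mul _).congr fun i =>
      (inner_smul_left (x i) (y i) c).symm)

lemma tendsto_inner (x y : BoundedFamily U H) :
    Tendsto (fun i => inner 𝕜 (x i) (y i)) U (𝓝 (inner 𝕜 x y)) :=
  x.tendsto_limUnder_inner y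

/-- The operator acting on bounded families coordinatewise through a bounded family of operators. -/
noncomputable def map (T : lp (fun i => H i →L[𝕜] H i) ∞) :
    BoundedFamily U H →L[𝕜] BoundedFamily U H :=
  LinearMap.mkContinuous
    { toFun := fun x => ⟨fun i => T i (x i), by
        obtain ⟨C, hC⟩ := x.exists_forall_norm_apply_le
        refine memℓp_infty ⟨‖T‖ * C, ?_⟩
        rintro _ ⟨i, rfl⟩
        exact (T i).le_of_opNorm_le_of_le (lp.norm_apply_le_norm ENNReal.top_ne_zero T i) (hC i)⟩
      map_add' := fun x y => ext fun i => (T i).map_add (x i) (y i)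
      map_smul' := fun c x => ext fun i => (T i).map_smul c (x i) } ‖T‖
    fun x => le_of_tendsto_of_tendsto' (tendsto_norm _) (x.tendsto_norm.const_mul ‖T‖) fun i =>
      (T i).le_of_opNorm_le (lp.norm_apply_le_norm ENNReal.top_ne_zero T i) (x i)

lemma map_apply (T : lp (fun i => H i →L[𝕜] H i) ∞) (x : BoundedFamily U H) (i : ι) :
    map T x i = T i (x i) :=
  rfl

end InnerProductSpace

end BoundedFamily

/-- The ultraproduct of the spaces `H i` along `U`. The completion is separated, so it also
identifies bounded families whose difference tends to zero along `U`. -/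
abbrev Ultraproduct (U : Ultrafilter ι) (H : ι → Type*) [∀ i, NormedAddCommGroup (H i)] : Type _ :=
  Completion (BoundedFamily U H)

namespace Ultraproduct

variable {𝕜 : Type*} [RCLike 𝕜] {U : Ultrafilter ι} {H : ι → Type*}
  [∀ i, NormedAddCommGroup (H i)] [∀ i, InnerProductSpace 𝕜 (H i)]

lemma operator_ext {S T : Ultraproduct U H →L[𝕜] Ultraproduct U H}
    (h : ∀ x : BoundedFamily U H, S x = T x) : S = T :=
  ContinuousLinearMap.ext fun x =>
    Completion.induction_on x (isClosed_eq S.continuous T.continuous) h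

/-- Bounded families of operators act on the ultraproduct coordinatewise. -/
noncomputable def map :
    lp (fun i => H i →L[𝕜] H i) ∞ →ₗ[𝕜] (Ultraproduct U H →L[𝕜] Ultraproduct U H) where
  toFun T := (BoundedFamily.map T).completion
  map_add' S T := operator_ext fun x => by
    rw [_root_.add_apply]
    simp only [completion_apply_coe, ← Completion.coe_add]
    rfl
  map_smul' c T := operator_ext fun x => by
    rw [_root_.smul_apply]
    simp only [completion_apply_coe, ← Completion.coe_smul]
    rfl

lemma map_coe (T : lp (fun i => H i →L[𝕜] H i) ∞) (x : BoundedFamily U H) :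
    map T (x : Ultraproduct U H) = BoundedFamily.map T x :=
  completion_apply_coe _ x

lemma map_mul (S T : lp (fun i => H i →L[𝕜] H i) ∞) :
    map (U := U) (S * T) = map S * map T :=
  operator_ext fun x => by
    rw [mul_apply_eq_comp]
    simp only [map_coe]
    rfl

lemma commute_map {S T : lp (fun i => H i →L[𝕜] H i) ∞} (h : ∀ i, Commute (S i) (T i)) :
    Commute (map (U := U) S) (map T) := by
  have hST : S * T = T * S := lp.ext (funext h)
  rw [commute_iff_eq, ← map_mul, hST, map_mul]

lemma map_eq_one {T : lp (fun i => H i →L[𝕜] H i) ∞} (hT : ∀ i, T i = 1) :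
    map (U := U) T = 1 :=
  operator_ext fun x => by
    rw [map_coe, one_apply_eq_self]
    congr 1
    ext i
    rw [BoundedFamily.map_apply, hT, one_apply_eq_self]

lemma tendsto_inner_map (T : lp (fun i => H i →L[𝕜] H i) ∞) (x y : BoundedFamily U H) :
    Tendsto (fun i => inner 𝕜 (x i) (T i (y i))) U
      (𝓝 (inner 𝕜 (x : Ultraproduct U H) (map T (y : Ultraproduct U H)))) := by
  rw [map_coe, Completion.inner_coe]
  exact x.tendsto_inner (BoundedFamily.map T y)

end Ultraproduct

lemma isPositive_blockOperator_map_ultraproduct {U : Ultrafilter ι} {H : ι → Type*}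
    [∀ i, NormedAddCommGroup (H i)] [∀ i, InnerProductSpace ℂ (H i)] {κ : Type*} [Fintype κ]
    {M : Matrix κ κ (lp (fun i => H i →L[ℂ] H i) ∞)}
    (hM : ∀ i, (blockOperator (M.map fun T => T i)).IsPositive) :
    (blockOperator (M.map (Ultraproduct.map (U := U)))).IsPositive := by
  simp only [isPositive_blockOperator_iff] at hM ⊢
  have hdense : DenseRange (Pi.map fun _ : κ => ((↑) : BoundedFamily U H → Ultraproduct U H)) :=
    DenseRange.piMap fun _ => Completion.denseRange_coe
  refine fun v => hdense.induction_on v (isClosed_le continuous_const ?_) fun x => ?_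
  · exact continuous_finsetSum _ fun p _ => continuous_finsetSum _ fun q _ =>
      (continuous_apply p).inner ((ContinuousLinearMap.continuous _).comp (continuous_apply q))
  · exact ge_of_tendsto' (tendsto_finsetSum _ fun p _ => tendsto_finsetSum _ fun q _ =>
      Ultraproduct.tendsto_inner_map (M p q) (x p) (x q)) fun i => hM i fun p => x p i

end Ultraproduct

section StochasticOperatorMatrix

open scoped lp ENNReal

variable {X A : Type*}

/-- An operator matrix over `(X, A)` as a square matrix indexed by `X × A`. -/
def blockMatrix {R : Type*} (E : X → X → A → A → R) : Matrix (X × A) (X × A) R :=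
  of fun p q => E p.1 q.1 p.2 q.2

namespace IsStochasticOperatorMatrix

variable [Fintype X] [Fintype A] [DecidableEq X] {H : Type*}
  [NormedAddCommGroup H] [InnerProductSpace ℂ H] {E : X → X → A → A → (H →L[ℂ] H)}

lemma isPositive_blockOperator (hE : IsStochasticOperatorMatrix E) :
    (blockOperator (blockMatrix E)).IsPositive :=
  (isPositive_blockOperator_iff _).2 hE.1

lemma norm_apply_le_one (hE : IsStochasticOperatorMatrix E) (x x' : X) (a a' : A) :
    ‖E x x' a a'‖ ≤ 1 := by
  classical
  have hdiag (p : X × A) : (E p.1 p.1 p.2 p.2).IsPositive := by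
    refine (isPositive_iff_forall_inner_nonneg _).2 fun v => ?_
    have h := hE.isPositive_blockOperator.inner_nonneg_right (PiLp.single 2 p v)
    rwa [inner_single_blockOperator_single] at h
  have hle (p : X × A) : E p.1 p.1 p.2 p.2 ≤ 1 := by
    have hrest : 1 - E p.1 p.1 p.2 p.2 = ∑ c ∈ Finset.univ.erase p.2, E p.1 p.1 c c := by
      rw [sub_eq_iff_eq_add, Finset.sum_erase_add _ _ (Finset.mem_univ p.2), hE.2, if_pos rfl]
    rw [le_def, hrest]
    exact isPositive_sum _ fun c _ => hdiag (p.1, c)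
  exact norm_le_one_of_isPositive_blockOperator hE.isPositive_blockOperator hle (x, a) (x', a')

lemma ultraproduct {ι : Type*} {U : Ultrafilter ι} {K : ι → Type*}
    [∀ i, NormedAddCommGroup (K i)] [∀ i, InnerProductSpace ℂ (K i)]
    {E : X → X → A → A → lp (fun i => K i →L[ℂ] K i) ∞}
    (hE : ∀ i, IsStochasticOperatorMatrix fun x x' a a' => E x x' a a' i) :
    IsStochasticOperatorMatrix fun x x' a a' => Ultraproduct.map (U := U) (E x x' a a') := by
  refine ⟨(isPositive_blockOperator_iff _).1
    (isPositive_blockOperator_map_ultraproduct (M := blockMatrix E) fun i =>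
      (hE i).isPositive_blockOperator), fun x x' => ?_⟩
  have hsum (i : ι) : (∑ a, E x x' a a) i = if x = x' then 1 else 0 := by
    rw [lp.coeFn_sum, Finset.sum_apply, (hE i).2]
  rw [← map_sum]
  split_ifs at hsum ⊢ with h
  · exact Ultraproduct.map_eq_one hsum
  · rw [lp.ext (funext hsum : _ = ⇑(0 : lp (fun i => K i →L[ℂ] K i) ∞)), map_zero]

end IsStochasticOperatorMatrix

end StochasticOperatorMatrix

section CorrelationMap

open Filter Topology
open scoped lp ENNReal

variable {X Y A B H : Type*} [Fintype X] [Fintype Y] [DecidableEq X] [DecidableEq Y]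
  [NormedAddCommGroup H] [InnerProductSpace ℂ H]

/-- The linear map on `M_{X×Y}` that `IsQCCorrelation` attaches to a vector `ξ` and operator
matrices `E` and `F`, defined here for arbitrary `ξ`, `E` and `F`. -/
noncomputable def correlationMap (ξ : H) (E : X → X → A → A → (H →L[ℂ] H))
    (F : Y → Y → B → B → (H →L[ℂ] H)) :
    Matrix (X × Y) (X × Y) ℂ →ₗ[ℂ] Matrix (A × B) (A × B) ℂ :=
  liftLinear ℂ fun p q => LinearMap.toSpanSingleton ℂ _
    (of fun r s => ⟪ξ, (E p.1 q.1 r.1 s.1 * F p.2 q.2 r.2 s.2) ξ⟫)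

variable {ξ : H} {E : X → X → A → A → (H →L[ℂ] H)} {F : Y → Y → B → B → (H →L[ℂ] H)}

lemma correlationMap_single (p q : X × Y) :
    correlationMap ξ E F (single p q 1) =
      of fun r s => ⟪ξ, (E p.1 q.1 r.1 s.1 * F p.2 q.2 r.2 s.2) ξ⟫ := by
  rw [correlationMap, liftLinear_single, LinearMap.toSpanSingleton_apply_one]

lemma correlationMap_apply (σ : Matrix (X × Y) (X × Y) ℂ) (r s : A × B) :
    correlationMap ξ E F σ r s =
      ∑ p, ∑ q, σ p q * ⟪ξ, (E p.1 q.1 r.1 s.1 * F p.2 q.2 r.2 s.2) ξ⟫ := by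
  rw [map_apply_eq_sum_mul_choiMatrix]
  simp only [choiMatrix_apply, correlationMap_single, of_apply]

lemma tendsto_correlationMap_ultraproduct {ι : Type*} {U : Ultrafilter ι} {K : ι → Type*}
    [∀ i, NormedAddCommGroup (K i)] [∀ i, InnerProductSpace ℂ (K i)] (ξ : BoundedFamily U K)
    (E : X → X → A → A → lp (fun i => K i →L[ℂ] K i) ∞)
    (F : Y → Y → B → B → lp (fun i => K i →L[ℂ] K i) ∞) :
    Tendsto (fun i => ⇑(correlationMap (ξ i) (fun x x' a a' => E x x' a a' i)
        fun y y' b b' => F y y' b b' i)) U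
      (𝓝 ⇑(correlationMap (ξ : Ultraproduct U K) (fun x x' a a' => Ultraproduct.map (E x x' a a'))
        fun y y' b b' => Ultraproduct.map (F y y' b b'))) := by
  refine tendsto_pi_nhds.2 fun σ => tendsto_pi_nhds.2 fun r => tendsto_pi_nhds.2 fun s => ?_
  simp only [correlationMap_apply, ← Ultraproduct.map_mul]
  exact tendsto_finsetSum _ fun p _ => tendsto_finsetSum _ fun q _ =>
    (Ultraproduct.tendsto_inner_map (E p.1 q.1 r.1 s.1 * F p.2 q.2 r.2 s.2) ξ ξ).const_mul _

variable [Fintype A] [Fintype B]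

lemma posSemidef_choiMatrix_correlationMap [CompleteSpace H] (hE : IsStochasticOperatorMatrix E)
    (hF : IsStochasticOperatorMatrix F)
    (hcomm : ∀ x x' y y' a a' b b', Commute (E x x' a a') (F y y' b b')) :
    (choiMatrix (correlationMap ξ E F)).PosSemidef := by
  classical
  have hpos : (blockOperator (blockMatrix E ⊗ₖ blockMatrix F)).IsPositive :=
    isPositive_blockOperator_kronecker hE.isPositive_blockOperator hF.isPositive_blockOperator
      fun i j k l => hcomm i.1 j.1 k.1 l.1 i.2 j.2 k.2 l.2
  have hchoi : choiMatrix (correlationMap ξ E F) =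
      of fun p q => ⟪PiLp.single 2 (Equiv.prodProdProdComm X Y A B p) ξ,
        blockOperator (blockMatrix E ⊗ₖ blockMatrix F)
          (PiLp.single 2 (Equiv.prodProdProdComm X Y A B q) ξ)⟫ := by
    ext p q
    rw [choiMatrix_apply, correlationMap_single, of_apply, of_apply,
      inner_single_blockOperator_single]
    rfl
  rw [hchoi]
  exact posSemidef_of_inner_isPositive hpos _

lemma trace_correlationMap (hξ : ‖ξ‖ = 1) (hE : IsStochasticOperatorMatrix E)
    (hF : IsStochasticOperatorMatrix F) (σ : Matrix (X × Y) (X × Y) ℂ) :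
    (correlationMap ξ E F σ).trace = σ.trace := by
  suffices traceLinearMap (A × B) ℂ ℂ ∘ₗ correlationMap ξ E F = traceLinearMap (X × Y) ℂ ℂ from
    LinearMap.congr_fun this σ
  refine ext_linearMap _ fun p q => LinearMap.ext_ring ?_
  have hsum : ∑ r : A × B, E p.1 q.1 r.1 r.1 * F p.2 q.2 r.2 r.2 = if p = q then 1 else 0 := by
    simp only [Fintype.sum_prod_type, ← Finset.sum_mul_sum, hE.2, hF.2]
    simp [Prod.ext_iff, ← ite_and, and_comm]
  calc (correlationMap ξ E F (single p q 1)).trace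
      = ⟪ξ, (∑ r : A × B, E p.1 q.1 r.1 r.1 * F p.2 q.2 r.2 r.2) ξ⟫ := by
        rw [correlationMap_single, _root_.sum_apply, inner_sum]
        rfl
    _ = (single p q (1 : ℂ)).trace := by
        rw [hsum]
        split_ifs with h
        · simp [h, inner_self_eq_norm_sq_to_K, hξ]
        · simp [h]

end CorrelationMap

section QCCorrelation

open Filter Topology
open scoped lp ENNReal

variable {X Y A B : Type} [Fintype X] [Fintype Y] [Fintype A] [Fintype B]
  [DecidableEq X] [DecidableEq Y]

lemma isQCCorrelation_iff {Γ : Matrix (X × Y) (X × Y) ℂ →ₗ[ℂ] Matrix (A × B) (A × B) ℂ} :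
    IsQCCorrelation Γ ↔ ∃ (ℍ : HilbertC) (ξ : ℍ.carrier)
      (E : X → X → A → A → (ℍ.carrier →L[ℂ] ℍ.carrier))
      (F : Y → Y → B → B → (ℍ.carrier →L[ℂ] ℍ.carrier)),
      ‖ξ‖ = 1 ∧ IsStochasticOperatorMatrix E ∧ IsStochasticOperatorMatrix F ∧
        (∀ x x' y y' a a' b b', Commute (E x x' a a') (F y y' b b')) ∧
          Γ = correlationMap ξ E F := by
  have hmap {H : Type} [NormedAddCommGroup H] [InnerProductSpace ℂ H] (ξ : H)
      (E : X → X → A → A → (H →L[ℂ] H)) (F : Y → Y → B → B → (H →L[ℂ] H)) :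
      (∀ x x' y y', Γ (single x x' 1 ⊗ₖ single y y' 1) =
        of fun p q => ⟪ξ, (E x x' p.1 q.1 ∘L F y y' p.2 q.2) ξ⟫) ↔ Γ = correlationMap ξ E F := by
    simp only [single_kronecker_single, mul_one]
    refine ⟨fun h => ext_linearMap _ fun p q => LinearMap.ext_ring ?_, ?_⟩
    · exact (h p.1 q.1 p.2 q.2).trans (correlationMap_single p q).symm
    · rintro rfl x x' y y'
      exact correlationMap_single (x, y) (x', y')
  simp only [IsQCCorrelation, hmap]

namespace IsQCCorrelation

variable {Γ : Matrix (X × Y) (X × Y) ℂ →ₗ[ℂ] Matrix (A × B) (A × B) ℂ}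

lemma posSemidef_map (hΓ : IsQCCorrelation Γ) {ρ : Matrix (X × Y) (X × Y) ℂ}
    (hρ : ρ.PosSemidef) : (Γ ρ).PosSemidef := by
  obtain ⟨ℍ, ξ, E, F, -, hE, hF, hcomm, rfl⟩ := isQCCorrelation_iff.1 hΓ
  exact posSemidef_map_of_posSemidef_choiMatrix
    (posSemidef_choiMatrix_correlationMap hE hF hcomm) hρ

lemma trace_map (hΓ : IsQCCorrelation Γ) (σ : Matrix (X × Y) (X × Y) ℂ) :
    (Γ σ).trace = σ.trace := by
  obtain ⟨ℍ, ξ, E, F, hξ, hE, hF, -, rfl⟩ := isQCCorrelation_iff.1 hΓ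
  exact trace_correlationMap hξ hE hF σ

lemma exists_tendsto_ultrafilter {ι : Type} (U : Ultrafilter ι)
    {Γ : ι → Matrix (X × Y) (X × Y) ℂ →ₗ[ℂ] Matrix (A × B) (A × B) ℂ}
    (hΓ : ∀ i, IsQCCorrelation (Γ i)) :
    ∃ Γ' : Matrix (X × Y) (X × Y) ℂ →ₗ[ℂ] Matrix (A × B) (A × B) ℂ,
      IsQCCorrelation Γ' ∧ Tendsto (fun i => ⇑(Γ i)) U (𝓝 ⇑Γ') := by
  choose ℍ ξ E F hξ hE hF hcomm hΓ using fun i => isQCCorrelation_iff.1 (hΓ i)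
  let E' (x x' : X) (a a' : A) : lp (fun i => (ℍ i).carrier →L[ℂ] (ℍ i).carrier) ∞ :=
    ⟨fun i => E i x x' a a', memℓp_infty ⟨1, Set.forall_mem_range.2 fun i =>
      (hE i).norm_apply_le_one x x' a a'⟩⟩
  let F' (y y' : Y) (b b' : B) : lp (fun i => (ℍ i).carrier →L[ℂ] (ℍ i).carrier) ∞ :=
    ⟨fun i => F i y y' b b', memℓp_infty ⟨1, Set.forall_mem_range.2 fun i =>
      (hF i).norm_apply_le_one y y' b b'⟩⟩
  let η : BoundedFamily U fun i => (ℍ i).carrier :=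
    ⟨ξ, memℓp_infty ⟨1, Set.forall_mem_range.2 fun i => (hξ i).le⟩⟩
  refine ⟨correlationMap (η : Ultraproduct U fun i => (ℍ i).carrier)
    (fun x x' a a' => Ultraproduct.map (E' x x' a a'))
    (fun y y' b b' => Ultraproduct.map (F' y y' b b')), ?_, ?_⟩
  · have hη : ‖(η : Ultraproduct U fun i => (ℍ i).carrier)‖ = 1 := by
      rw [UniformSpace.Completion.norm_coe]
      exact tendsto_nhds_unique η.tendsto_norm (tendsto_const_nhds.congr fun i => (hξ i).symm)
    have hE' : IsStochasticOperatorMatrix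
        fun x x' a a' => Ultraproduct.map (U := U) (E' x x' a a') :=
      .ultraproduct hE
    have hF' : IsStochasticOperatorMatrix
        fun y y' b b' => Ultraproduct.map (U := U) (F' y y' b b') :=
      .ultraproduct hF
    have hcomm' (x x' y y' a a' b b') : Commute (Ultraproduct.map (U := U) (E' x x' a a'))
        (Ultraproduct.map (F' y y' b b')) :=
      Ultraproduct.commute_map fun i => hcomm i x x' y y' a a' b b'
    exact isQCCorrelation_iff.2 ⟨⟨Ultraproduct U fun i => (ℍ i).carrier⟩, η, _, _, hη,
      hE', hF', hcomm', rfl⟩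
  obtain rfl : Γ = _ := funext hΓ
  exact tendsto_correlationMap_ultraproduct η E' F'

end IsQCCorrelation

lemma isCompact_setOf_exists_isQCCorrelation :
    IsCompact {f : Matrix (X × Y) (X × Y) ℂ → Matrix (A × B) (A × B) ℂ |
      ∃ Γ : Matrix (X × Y) (X × Y) ℂ →ₗ[ℂ] Matrix (A × B) (A × B) ℂ,
        IsQCCorrelation Γ ∧ ⇑Γ = f} := by
  refine isCompact_iff_ultrafilter_le_nhds'.2 fun V hV => ?_
  let toFun (Γ : {Γ : Matrix (X × Y) (X × Y) ℂ →ₗ[ℂ] Matrix (A × B) (A × B) ℂ //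
    IsQCCorrelation Γ}) : Matrix (X × Y) (X × Y) ℂ → Matrix (A × B) (A × B) ℂ := Γ.1
  have hinj : Function.Injective toFun := DFunLike.coe_injective.comp Subtype.val_injective
  have hrange : Set.range toFun ∈ V := by
    filter_upwards [hV]
    rintro _ ⟨Γ, hΓ, rfl⟩
    exact ⟨⟨Γ, hΓ⟩, rfl⟩
  obtain ⟨Γ, hΓ, hlim⟩ :=
    IsQCCorrelation.exists_tendsto_ultrafilter (V.comap hinj hrange) Subtype.prop
  rw [Tendsto, Ultrafilter.coe_comap] at hlim
  exact ⟨Γ, ⟨Γ, hΓ, rfl⟩, (map_comap_of_mem hrange).ge.trans hlim⟩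

end QCCorrelation

section ImplicationGame

variable {X Y A B : Type} [Fintype X] [Fintype Y] [Fintype A] [Fintype B]
  [DecidableEq X] [DecidableEq Y] {P : Matrix (X × Y) (X × Y) ℂ} {Q : Matrix (A × B) (A × B) ℂ}
  {k : ℕ}

/-- The values `Tr (Γ(P) Q) / k` that quantum commuting strategies achieve in the implication game
`P ⇒ Q`. -/
def implicationValues (P : Matrix (X × Y) (X × Y) ℂ) (Q : Matrix (A × B) (A × B) ℂ) (k : ℕ) :
    Set ℝ :=
  {t | ∃ Γ : Matrix (X × Y) (X × Y) ℂ →ₗ[ℂ] Matrix (A × B) (A × B) ℂ,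
    IsQCCorrelation Γ ∧ (t : ℂ) = (1 / (k : ℂ)) * (Γ P * Q).trace}

lemma isCompact_implicationValues (P : Matrix (X × Y) (X × Y) ℂ) (Q : Matrix (A × B) (A × B) ℂ)
    (k : ℕ) : IsCompact (implicationValues P Q k) := by
  have hcont : Continuous fun f : Matrix (X × Y) (X × Y) ℂ → Matrix (A × B) (A × B) ℂ =>
      (1 / (k : ℂ)) * (f P * Q).trace :=
    continuous_const.mul ((continuous_apply P).matrix_mul continuous_const).matrix_trace
  have hpreimage : implicationValues P Q k = ((↑) : ℝ → ℂ) ⁻¹'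
      ((fun f : Matrix (X × Y) (X × Y) ℂ → Matrix (A × B) (A × B) ℂ =>
        (1 / (k : ℂ)) * (f P * Q).trace) ''
          {f | ∃ Γ : Matrix (X × Y) (X × Y) ℂ →ₗ[ℂ] Matrix (A × B) (A × B) ℂ,
            IsQCCorrelation Γ ∧ ⇑Γ = f}) := by
    ext t
    simp [implicationValues, eq_comm]
  rw [hpreimage]
  exact Complex.isUniformEmbedding_ofReal.isClosedEmbedding.isCompact_preimage
    (isCompact_setOf_exists_isQCCorrelation.image hcont)

lemma le_one_of_mem_implicationValues (hP : IsStarProjection P) (hQ : IsStarProjection Q)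
    (hk : 1 ≤ k) (hrank : P.rank = k) {t : ℝ} (ht : t ∈ implicationValues P Q k) : t ≤ 1 := by
  obtain ⟨Γ, hΓ, ht⟩ := ht
  have htrace : P.trace = k := by
    rw [trace_eq_rank_of_isIdempotentElem hP.isIdempotentElem, hrank]
  have hbound : (Γ P * Q).trace ≤ k := by
    rw [← htrace, ← hΓ.trace_map P]
    exact trace_mul_le_trace hQ (hΓ.posSemidef_map (posSemidef_of_isStarProjection hP))
  have hk0 : (0 : ℝ) < k := Nat.cast_pos.2 hk
  have htk : (Γ P * Q).trace = ((t * k : ℝ) : ℂ) := by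
    have : (k : ℂ) ≠ 0 := by exact_mod_cast hk0.ne'
    push_cast
    rw [ht]
    field_simp
  rw [htk] at hbound
  have hreal : t * k ≤ k := by exact_mod_cast hbound
  exact (mul_le_iff_le_one_left hk0).1 hreal

lemma one_mem_implicationValues_iff (hP : IsStarProjection P) (hQ : IsStarProjection Q)
    (hk : 1 ≤ k) (hrank : P.rank = k) :
    1 ∈ implicationValues P Q k ↔
      ∃ Γ : Matrix (X × Y) (X × Y) ℂ →ₗ[ℂ] Matrix (A × B) (A × B) ℂ,
        IsQCCorrelation Γ ∧ ∀ σ, σ = P * σ * P → Γ σ = Q * Γ σ * Q := by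
  have hk0 : (k : ℂ) ≠ 0 := Nat.cast_ne_zero.2 (Nat.one_le_iff_ne_zero.1 hk)
  refine exists_congr fun Γ => and_congr_right fun hΓ => ?_
  rw [← trace_map_mul_eq_trace_iff (fun _ => hΓ.posSemidef_map) hΓ.trace_map hP hQ,
    trace_eq_rank_of_isIdempotentElem hP.isIdempotentElem, hrank, Complex.ofReal_one,
    one_div_mul_eq_div, eq_div_iff hk0, one_mul, eq_comm]

theorem statement16_general (hP : IsStarProjection P) (hQ : IsStarProjection Q)
    (hk : 1 ≤ k) (hrank : P.rank = k) :
    sSup (implicationValues P Q k) = 1 ↔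
      ∃ Γ : Matrix (X × Y) (X × Y) ℂ →ₗ[ℂ] Matrix (A × B) (A × B) ℂ,
        IsQCCorrelation Γ ∧ ∀ σ, σ = P * σ * P → Γ σ = Q * Γ σ * Q := by
  have hcompact := isCompact_implicationValues P Q k
  have hle := fun t => le_one_of_mem_implicationValues (t := t) hP hQ hk hrank
  rw [← one_mem_implicationValues_iff hP hQ hk hrank]
  constructor
  · intro hsup
    have hne : (implicationValues P Q k).Nonempty := by
      by_contra! hempty
      simp [hempty] at hsup
    exact hsup ▸ hcompact.sSup_mem hne
  · exact fun hmem => IsGreatest.csSup_eq ⟨hmem, hle⟩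

end ImplicationGame

/-- For the quantum implication game `P ⇒ Q`, the quantum commuting
value equals `1` iff the game has a perfect quantum commuting strategy. -/
theorem statement16
    {X A : Type} [Fintype X] [Fintype A] [Nonempty X] [Nonempty A]
    [DecidableEq X] [DecidableEq A]
    (P : Matrix (X × X) (X × X) ℂ) (Q : Matrix (A × A) (A × A) ℂ)
    (hP : P.IsHermitian ∧ P * P = P) (hQ : Q.IsHermitian ∧ Q * Q = Q)
    (k : ℕ) (hk : 1 ≤ k) (hrank : P.rank = k) :
    sSup {t : ℝ | ∃ Γ : Matrix (X × X) (X × X) ℂ →ₗ[ℂ] Matrix (A × A) (A × A) ℂ,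
        IsQCCorrelation Γ ∧ (t : ℂ) = (1 / (k : ℂ)) * Matrix.trace (Γ P * Q)} = 1
    ↔
    ∃ Γ : Matrix (X × X) (X × X) ℂ →ₗ[ℂ] Matrix (A × A) (A × A) ℂ,
      IsQCCorrelation Γ ∧
      ∀ σ : Matrix (X × X) (X × X) ℂ, σ = P * σ * P → Γ σ = Q * Γ σ * Q :=
  statement16_general ⟨hP.2, hP.1⟩ ⟨hQ.2, hQ.1⟩ hk hrank
end

section
/- Let n ≥ 1 and m ≥ 1, and consider the quadruple X = [n], Y = {1}, A = {1}, B = [n] with reference space ℂ^R, R = [n]. Let ξ = n^{-1/2} Σ_{i=1}^n (e_i ⊗ e_1) ⊗ e_i ∈ ℂ^{X×Y} ⊗ ℂ^R, let γ_{k,i} ∈ ℂ (k ∈ [m], i ∈ [n]) satisfy Σ_{i=1}^n conj(γ_{k,i}) γ_{l,i} = δ_{k,l}, set γ_k = Σ_{i=1}^n γ_{k,i} (e_1 ⊗ e_i) ⊗ e_i ∈ ℂ^{A×B} ⊗ ℂ^R, and let P = Σ_{k=1}^m γ_k γ_k* (an orthogonal projection). For a class 𝒞 of linear maps M_{X×Y}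 → M_{A×B}, let ω_𝒞(ξ,P) = sup_{Γ∈𝒞} Tr((Γ ⊗ id_{M_R})(ξξ*) P). Then ω_{Q_loc}(ξ,P) = ω_{Q_q}(ξ,P) = ω_{Q_qc}(ξ,P) = (1/n) · max_{1≤i≤n} Σ_{k=1}^m |γ_{k,i}|², which equals (1/n)‖Σ_{k=1}^m D_k* D_k‖ where D_k ∈ Mₙ(ℂ) is the diagonal matrix with diagonal entries γ_{k,1},…,γ_{k,n}. -/
open Matrix ContinuousLinearMap
open scoped Kronecker ComplexOrder ComplexInnerProductSpace

/-- The amplification `id_{M_m} ⊗ Φ` of a linear map `Φ : M_X → M_A`. -/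
def matAmpl {X A : Type*} (m : ℕ)
    (Φ : Matrix X X ℂ →ₗ[ℂ] Matrix A A ℂ)
    (M : Matrix (Fin m × X) (Fin m × X) ℂ) :
    Matrix (Fin m × A) (Fin m × A) ℂ :=
  Matrix.of fun p q => Φ (Matrix.of fun x x' => M (p.1, x) (q.1, x')) p.2 q.2

/-- Complete positivity of a linear map `Φ : M_X → M_A`. -/
def IsCPMap {X A : Type*} [Fintype X] [Fintype A]
    (Φ : Matrix X X ℂ →ₗ[ℂ] Matrix A A ℂ) : Prop :=
  ∀ (m : ℕ) (M : Matrix (Fin m × X) (Fin m × X) ℂ),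
    M.PosSemidef → (matAmpl m Φ M).PosSemidef

/-- A quantum channel is a completely positive trace-preserving linear map. -/
def IsQChannel {X A : Type*} [Fintype X] [Fintype A]
    (Φ : Matrix X X ℂ →ₗ[ℂ] Matrix A A ℂ) : Prop :=
  IsCPMap Φ ∧ ∀ M : Matrix X X ℂ, (Φ M).trace = M.trace

/-- Local QNS correlations. -/
def IsLocalCorrelation {X Y A B : Type} [Fintype X] [Fintype Y] [Fintype A] [Fintype B]
    (Γ : Matrix (X × Y) (X × Y) ℂ →ₗ[ℂ] Matrix (A × B) (A × B) ℂ) : Prop :=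
  ∃ (k : ℕ)
    (Φ : Fin k → (Matrix X X ℂ →ₗ[ℂ] Matrix A A ℂ))
    (Ψ : Fin k → (Matrix Y Y ℂ →ₗ[ℂ] Matrix B B ℂ))
    (lam : Fin k → ℝ),
    (∀ i, IsQChannel (Φ i)) ∧ (∀ i, IsQChannel (Ψ i)) ∧
    (∀ i, 0 ≤ lam i) ∧ (∑ i, lam i = 1) ∧
    (∀ (ρ : Matrix X X ℂ) (τ : Matrix Y Y ℂ),
      Γ (ρ ⊗ₖ τ) = ∑ i, (lam i : ℂ) • ((Φ i ρ) ⊗ₖ (Ψ i τ)))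

/-- A stochastic operator matrix over `(X, A)` acting on `ℂ^d`, as a family of
matrices. -/
def IsStochasticMatrixFam {X A : Type*} [Fintype X] [Fintype A] [DecidableEq X]
    {d : ℕ} (E : X → X → A → A → Matrix (Fin d) (Fin d) ℂ) : Prop :=
  (Matrix.PosSemidef (Matrix.of
      (fun (p q : (X × A) × Fin d) => E p.1.1 q.1.1 p.1.2 q.1.2 p.2 q.2))) ∧
  (∀ x x' : X, ∑ a : A, E x x' a a = if x = x' then 1 else 0)

/-- QNS correlations of quantum type. -/
def IsQCorrelation {X Y A B : Type} [Fintype X] [Fintype Y] [Fintype A] [Fintype B]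
    [DecidableEq X] [DecidableEq Y]
    (Γ : Matrix (X × Y) (X × Y) ℂ →ₗ[ℂ] Matrix (A × B) (A × B) ℂ) : Prop :=
  ∃ (dA dB : ℕ)
    (E : X → X → A → A → Matrix (Fin dA) (Fin dA) ℂ)
    (F : Y → Y → B → B → Matrix (Fin dB) (Fin dB) ℂ)
    (ξ : Fin dA × Fin dB → ℂ),
    IsStochasticMatrixFam E ∧ IsStochasticMatrixFam F ∧
    (∑ i, ‖ξ i‖ ^ 2 = 1) ∧
    (∀ (x x' : X) (y y' : Y),
      Γ ((Matrix.single x x' (1 : ℂ)) ⊗ₖ (Matrix.single y y' (1 : ℂ)))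
        = Matrix.of fun p q =>
            dotProduct (star ξ) ((E x x' p.1 q.1 ⊗ₖ F y y' p.2 q.2).mulVec ξ))

/-!
A channel into a one-dimensional algebra is the trace. Hence, when Alice has a single output and Bob
a single input, a correlation from any of the three classes discards its input and prepares a fixed
state `τ` of `B`, and every state `τ` arises in each class: the three classes coincide. For the
maximally entangled `ξ` the payoff of such a correlation is the convex combination
`(1/n) ∑ᵢ τᵢᵢ ∑ₖ |γₖᵢ|²`, which is largest at a pure state `τ = εᵢᵢ`.
-/

/-- Over `ℂ`, hermiticity is automatic once the quadratic form takes nonnegative values. -/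
theorem posSemidef_of_forall_dotProduct_mulVec_nonneg {V : Type*} [Fintype V] {M : Matrix V V ℂ}
    (h : ∀ v : V → ℂ, 0 ≤ star v ⬝ᵥ (M *ᵥ v)) : M.PosSemidef := by
  classical
  rw [← isPositive_toEuclideanLin_iff, LinearMap.isPositive_iff_complex]
  intro v
  have hv : 0 ≤ ⟪M.toEuclideanLin v, v⟫ := by
    rw [← inner_conj_symm, starRingEnd_apply, star_nonneg_iff,
      EuclideanSpace.inner_eq_star_dotProduct, dotProduct_comm]
    exact h v.ofLp
  exact ⟨(Complex.eq_re_of_ofReal_le (r := 0) (by simpa using hv)).symm, (Complex.le_def.mp hv).1⟩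

theorem sum_kronecker {κ V V' W W' : Type*} (s : Finset κ) (M : κ → Matrix V V' ℂ)
    (N : Matrix W W' ℂ) : (∑ k ∈ s, M k) ⊗ₖ N = ∑ k ∈ s, M k ⊗ₖ N := by
  ext
  simp [Matrix.sum_apply, Finset.sum_mul]

theorem kronecker_sum {κ V V' W W' : Type*} (s : Finset κ) (M : Matrix V V' ℂ)
    (N : κ → Matrix W W' ℂ) : M ⊗ₖ (∑ k ∈ s, N k) = ∑ k ∈ s, M ⊗ₖ N k := by
  ext
  simp [Matrix.sum_apply, Finset.mul_sum]

section DensityMatrix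

variable {V W : Type*} [Fintype V] [Fintype W]

/-- States of the matrix algebra `M_V`, given by their density matrices. -/
def IsDensityMatrix (σ : Matrix V V ℂ) : Prop :=
  σ.PosSemidef ∧ σ.trace = 1

theorem isDensityMatrix_one [Unique V] [DecidableEq V] : IsDensityMatrix (1 : Matrix V V ℂ) :=
  ⟨.one, by simp⟩

theorem isDensityMatrix_single [DecidableEq V] (v : V) : IsDensityMatrix (single v v (1 : ℂ)) := by
  refine ⟨?_, by simp⟩
  rw [← diagonal_single]
  exact .diagonal (Pi.single_nonneg.mpr zero_le_one)

theorem IsDensityMatrix.sum_smul {κ : Type*} [Fintype κ] {lam : κ → ℝ} {σ : κ → Matrix V V ℂ}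
    (hσ : ∀ k, IsDensityMatrix (σ k)) (h0 : ∀ k, 0 ≤ lam k) (h1 : ∑ k, lam k = 1) :
    IsDensityMatrix (∑ k, (lam k : ℂ) • σ k) := by
  constructor
  · exact posSemidef_sum _ fun k _ => (hσ k).1.smul (Complex.zero_le_real.mpr (h0 k))
  · simp only [trace_sum, trace_smul, (hσ _).2, smul_eq_mul, mul_one]
    exact_mod_cast h1

theorem IsDensityMatrix.sum_diag_mul_le {σ : Matrix V V ℂ} (hσ : IsDensityMatrix σ) {g : V → ℝ}
    {c : ℝ} (hg : ∀ v, g v ≤ c) : ∑ v, σ v v * (g v : ℂ) ≤ c :=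
  calc ∑ v, σ v v * (g v : ℂ)
      ≤ ∑ v, σ v v * (c : ℂ) := Finset.sum_le_sum fun v _ =>
        mul_le_mul_of_nonneg_left (Complex.real_le_real.mpr (hg v)) hσ.1.diag_nonneg
    _ = σ.trace * c := (Finset.sum_mul ..).symm
    _ = c := by rw [hσ.2, one_mul]

theorem IsCPMap.posSemidef_apply {Φ : Matrix V V ℂ →ₗ[ℂ] Matrix W W ℂ} (hΦ : IsCPMap Φ)
    {M : Matrix V V ℂ} (hM : M.PosSemidef) : (Φ M).PosSemidef :=
  (hΦ 1 (M.submatrix Prod.snd Prod.snd) (hM.submatrix _)).submatrix fun w => ((0 : Fin 1), w)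

theorem IsQChannel.isDensityMatrix_apply {Φ : Matrix V V ℂ →ₗ[ℂ] Matrix W W ℂ}
    (hΦ : IsQChannel Φ) {σ : Matrix V V ℂ} (hσ : IsDensityMatrix σ) : IsDensityMatrix (Φ σ) :=
  ⟨hΦ.1.posSemidef_apply hσ.1, (hΦ.2 σ).trans hσ.2⟩

theorem IsQChannel.apply_of_unique [Unique W] [DecidableEq W]
    {Φ : Matrix V V ℂ →ₗ[ℂ] Matrix W W ℂ} (hΦ : IsQChannel Φ) (M : Matrix V V ℂ) :
    Φ M = M.trace • (1 : Matrix W W ℂ) := by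
  ext w w'
  obtain rfl := Subsingleton.elim w default
  obtain rfl := Subsingleton.elim w' default
  rw [← hΦ.2 M, trace, Fintype.sum_unique]
  simp

end DensityMatrix

section ReplacementChannel

variable {X Y A B : Type*} [Fintype X] [Fintype Y]

/-- The map `M ↦ Tr(M) σ`, which discards its input and prepares `σ`; it is a quantum channel when
`σ` is a density matrix. -/
noncomputable def replacementChannel (σ : Matrix A A ℂ) : Matrix X X ℂ →ₗ[ℂ] Matrix A A ℂ :=
  (traceLinearMap X ℂ ℂ).smulRight σ

theorem replacementChannel_apply (σ : Matrix A A ℂ) (M : Matrix X X ℂ) :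
    replacementChannel σ M = M.trace • σ := rfl

theorem replacementChannel_kronecker (σ : Matrix A A ℂ) (τ : Matrix B B ℂ)
    (M : Matrix X X ℂ) (N : Matrix Y Y ℂ) :
    replacementChannel (σ ⊗ₖ τ) (M ⊗ₖ N)
      = replacementChannel σ M ⊗ₖ replacementChannel τ N := by
  simp only [replacementChannel_apply, trace_kronecker, smul_kronecker, kronecker_smul,
    smul_smul, mul_comm]

theorem replacementChannel_single [DecidableEq X] (σ : Matrix A A ℂ) (x x' : X) :
    replacementChannel σ (single x x' 1) = if x = x' then σ else 0 := by
  split_ifs with h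
  · simp [replacementChannel_apply, h]
  · simp [replacementChannel_apply, trace_single_eq_of_ne x x' (1 : ℂ) h]

theorem eq_replacementChannel_of_kronecker_single [DecidableEq X] [DecidableEq Y] [Unique Y]
    {Γ : Matrix (X × Y) (X × Y) ℂ →ₗ[ℂ] Matrix A A ℂ} {σ : Matrix A A ℂ}
    (h : ∀ x x', Γ (single x x' 1 ⊗ₖ single default default 1) = if x = x' then σ else 0) :
    Γ = replacementChannel σ := by
  refine ext_linearMap ℂ fun ⟨x, y⟩ ⟨x', y'⟩ => LinearMap.ext_ring ?_
  obtain rfl := Subsingleton.elim y default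
  obtain rfl := Subsingleton.elim y' default
  simpa [single_kronecker_single, replacementChannel_single] using h x x'

theorem isQChannel_replacementChannel [Fintype A] {σ : Matrix A A ℂ} (hσ : IsDensityMatrix σ) :
    IsQChannel (replacementChannel (X := X) σ) := by
  refine ⟨fun m M hM => ?_, fun M => by simp [replacementChannel_apply, hσ.2]⟩
  have hpartial : (∑ x, M.submatrix (·, x) (·, x)).PosSemidef :=
    posSemidef_sum _ fun x _ => hM.submatrix _
  have hampl : matAmpl m (replacementChannel σ) M = (∑ x, M.submatrix (·, x) (·, x)) ⊗ₖ σ := by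
    ext p q
    simp [matAmpl, replacementChannel_apply, trace, kroneckerMap_apply, Matrix.sum_apply]
  exact hampl ▸ hpartial.kronecker hσ.1

end ReplacementChannel

section StochasticOperatorMatrix

variable {X Y A B : Type*} [Fintype X] [Fintype Y] [Fintype A] [Fintype B]
  [DecidableEq X] [DecidableEq Y]

theorem inner_toEuclideanCLM_complex {V : Type*} [Fintype V] [DecidableEq V] (M : Matrix V V ℂ)
    (v w : EuclideanSpace ℂ V) :
    ⟪v, toEuclideanCLM (𝕜 := ℂ) M w⟫ = star v.ofLp ⬝ᵥ (M *ᵥ w.ofLp) := by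
  rw [EuclideanSpace.inner_eq_star_dotProduct, ofLp_toEuclideanCLM, dotProduct_comm]

theorem isStochasticOperatorMatrix_toEuclideanCLM {V : Type*} [Fintype V] [DecidableEq V]
    {E : X → X → A → A → Matrix V V ℂ}
    (hpos : (of fun p q : (X × A) × V => E p.1.1 q.1.1 p.1.2 q.1.2 p.2 q.2).PosSemidef)
    (hsum : ∀ x x', ∑ a, E x x' a a = if x = x' then 1 else 0) :
    IsStochasticOperatorMatrix fun x x' a a' => toEuclideanCLM (𝕜 := ℂ) (E x x' a a') := by
  constructor
  · intro ξ
    convert hpos.dotProduct_mulVec_nonneg fun p => (ξ p.1).ofLp p.2 using 1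
    simp only [inner_toEuclideanCLM_complex, dotProduct, mulVec, of_apply, Pi.star_apply,
      Fintype.sum_prod_type (α₁ := X × A), Finset.mul_sum]
    exact Finset.sum_congr rfl fun p _ => Finset.sum_comm
  · intro x x'
    rw [← map_sum, hsum]
    split_ifs <;> simp

theorem IsStochasticMatrixFam.kronecker_one {dA dB : ℕ}
    {E : X → X → A → A → Matrix (Fin dA) (Fin dA) ℂ} (hE : IsStochasticMatrixFam E) :
    IsStochasticOperatorMatrix fun x x' a a' =>
      toEuclideanCLM (𝕜 := ℂ) (E x x' a a' ⊗ₖ (1 : Matrix (Fin dB) (Fin dB) ℂ)) := by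
  refine isStochasticOperatorMatrix_toEuclideanCLM ?_ fun x x' => ?_
  · exact (hE.1.kronecker (.one (n := Fin dB))).submatrix
      fun p : (X × A) × Fin dA × Fin dB => ((p.1, p.2.1), p.2.2)
  · rw [← sum_kronecker, hE.2]
    split_ifs <;> simp

theorem IsStochasticMatrixFam.one_kronecker {dA dB : ℕ}
    {F : Y → Y → B → B → Matrix (Fin dB) (Fin dB) ℂ} (hF : IsStochasticMatrixFam F) :
    IsStochasticOperatorMatrix fun y y' b b' =>
      toEuclideanCLM (𝕜 := ℂ) ((1 : Matrix (Fin dA) (Fin dA) ℂ) ⊗ₖ F y y' b b') := by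
  refine isStochasticOperatorMatrix_toEuclideanCLM ?_ fun y y' => ?_
  · exact ((PosSemidef.one (n := Fin dA)).kronecker hF.1).submatrix
      fun p : (Y × B) × Fin dA × Fin dB => (p.2.1, (p.1, p.2.2))
  · rw [← kronecker_sum, hF.2]
    split_ifs <;> simp

theorem IsDensityMatrix.isStochasticMatrixFam {σ : Matrix A A ℂ} (hσ : IsDensityMatrix σ) :
    IsStochasticMatrixFam fun (x x' : X) a a' =>
      replacementChannel σ (single x x' 1) a a' • (1 : Matrix (Fin 1) (Fin 1) ℂ) := by
  constructor
  · have hpos : ((1 : Matrix X X ℂ) ⊗ₖ σ).PosSemidef := PosSemidef.one.kronecker hσ.1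
    convert hpos.submatrix (Prod.fst : (X × A) × Fin 1 → X × A) using 1
    ext ⟨⟨x, a⟩, u⟩ ⟨⟨x', a'⟩, v⟩
    obtain rfl := Subsingleton.elim u v
    by_cases h : x = x' <;> simp [replacementChannel_single, one_apply, h]
  · intro x x'
    have htrace : (replacementChannel σ (single x x' 1)).trace = if x = x' then 1 else 0 := by
      rw [replacementChannel_single, apply_ite trace, hσ.2, trace_zero]
    rw [← Finset.sum_smul]
    exact (congrArg (· • (1 : Matrix (Fin 1) (Fin 1) ℂ)) htrace).trans (by split_ifs <;> simp)

theorem IsStochasticOperatorMatrix.posSemidef_inner {H : Type*} [NormedAddCommGroup H]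
    [InnerProductSpace ℂ H] {E : X → X → A → A → H →L[ℂ] H} (hE : IsStochasticOperatorMatrix E)
    (ξ : H) : (of fun p q : X × A => ⟪ξ, E p.1 q.1 p.2 q.2 ξ⟫).PosSemidef := by
  refine posSemidef_of_forall_dotProduct_mulVec_nonneg fun v => ?_
  convert hE.1 fun p => v p • ξ using 1
  simp only [dotProduct, mulVec, of_apply, Pi.star_apply, RCLike.star_def, Finset.mul_sum, map_smul,
    inner_smul_left, inner_smul_right]
  exact Finset.sum_congr rfl fun p _ => Finset.sum_congr rfl fun q _ => by ring

theorem IsStochasticOperatorMatrix.isDensityMatrix_inner {H : Type*} [NormedAddCommGroup H]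
    [InnerProductSpace ℂ H] {E : X → X → A → A → H →L[ℂ] H} (hE : IsStochasticOperatorMatrix E)
    {ξ : H} (hξ : ‖ξ‖ = 1) (x : X) : IsDensityMatrix (of fun a a' => ⟪ξ, E x x a a' ξ⟫) := by
  refine ⟨(hE.posSemidef_inner ξ).submatrix (Prod.mk x), ?_⟩
  simp only [trace, diag_apply, of_apply]
  rw [← inner_sum, ← _root_.sum_apply, hE.2 x x, if_pos rfl, one_apply_eq_self,
    inner_self_eq_norm_sq_to_K, hξ]
  simp

end StochasticOperatorMatrix

section Correlations

variable {X Y A B : Type} [Fintype X] [Fintype Y] [Fintype A] [Fintype B]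
  {Γ : Matrix (X × Y) (X × Y) ℂ →ₗ[ℂ] Matrix (A × B) (A × B) ℂ}

theorem isLocalCorrelation_replacementChannel {σ : Matrix A A ℂ} {τ : Matrix B B ℂ}
    (hσ : IsDensityMatrix σ) (hτ : IsDensityMatrix τ) :
    IsLocalCorrelation (X := X) (Y := Y) (replacementChannel (σ ⊗ₖ τ)) :=
  ⟨1, fun _ => replacementChannel σ, fun _ => replacementChannel τ, fun _ => 1,
    fun _ => isQChannel_replacementChannel hσ, fun _ => isQChannel_replacementChannel hτ,
    by simp, by simp, fun M N => by simp [replacementChannel_kronecker]⟩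

theorem IsLocalCorrelation.exists_eq_replacementChannel [Unique Y] [Unique A]
    (h : IsLocalCorrelation Γ) : ∃ τ, IsDensityMatrix τ ∧ Γ = replacementChannel (1 ⊗ₖ τ) := by
  classical
  obtain ⟨k, Φ, Ψ, lam, hΦ, hΨ, h0, h1, hΓ⟩ := h
  refine ⟨∑ i, (lam i : ℂ) • Ψ i 1,
    .sum_smul (fun i => (hΨ i).isDensityMatrix_apply isDensityMatrix_one) h0 h1,
    eq_replacementChannel_of_kronecker_single fun x x' => ?_⟩
  have hone : single default default 1 = (1 : Matrix Y Y ℂ) := by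
    ext y y'
    obtain rfl := Subsingleton.elim y default
    obtain rfl := Subsingleton.elim y' default
    simp
  rw [← replacementChannel_single, replacementChannel_apply, hone, hΓ, kronecker_sum,
    Finset.smul_sum]
  refine Finset.sum_congr rfl fun i _ => ?_
  rw [(hΦ i).apply_of_unique, smul_kronecker, kronecker_smul, smul_comm]

variable [DecidableEq X] [DecidableEq Y]

theorem IsQCorrelation.isQCCorrelation (h : IsQCorrelation Γ) : IsQCCorrelation Γ := by
  obtain ⟨dA, dB, E, F, ξ, hE, hF, hξ, hΓ⟩ := h
  refine ⟨⟨EuclideanSpace ℂ (Fin dA × Fin dB)⟩, WithLp.toLp 2 ξ, _, _, ?_, hE.kronecker_one,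
    hF.one_kronecker, fun x x' y y' a a' b b' => ?_, fun x x' y y' => ?_⟩
  · simp [EuclideanSpace.norm_eq, hξ]
  · simp [Commute, SemiconjBy, ← map_mul, ← mul_kronecker_mul]
  · ext p q
    rw [hΓ, of_apply, of_apply, ← mul_def, ← map_mul, ← mul_kronecker_mul, mul_one, one_mul]
    exact (inner_toEuclideanCLM_complex _ (WithLp.toLp 2 ξ) (WithLp.toLp 2 ξ)).symm

theorem isQCorrelation_replacementChannel {σ : Matrix A A ℂ} {τ : Matrix B B ℂ}
    (hσ : IsDensityMatrix σ) (hτ : IsDensityMatrix τ) :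
    IsQCorrelation (X := X) (Y := Y) (replacementChannel (σ ⊗ₖ τ)) := by
  refine ⟨1, 1, _, _, fun _ => 1, hσ.isStochasticMatrixFam, hτ.isStochasticMatrixFam, by simp,
    fun x x' y y' => ?_⟩
  ext p q
  simp [replacementChannel_kronecker, dotProduct, mulVec, Fintype.sum_prod_type]

theorem IsQCCorrelation.exists_eq_replacementChannel [Unique Y] [Unique A]
    (h : IsQCCorrelation Γ) : ∃ τ, IsDensityMatrix τ ∧ Γ = replacementChannel (1 ⊗ₖ τ) := by
  obtain ⟨ℍ, ξ, E, F, hξ, hE, hF, -, hΓ⟩ := h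
  refine ⟨_, hF.isDensityMatrix_inner hξ default,
    eq_replacementChannel_of_kronecker_single fun x x' => ?_⟩
  have hEunique : ∀ a a', E x x' a a' = if x = x' then 1 else 0 := fun a a' => by
    rw [← hE.2 x x', Fintype.sum_unique, Subsingleton.elim a default, Subsingleton.elim a' default]
  rw [hΓ]
  ext p q
  obtain rfl | hx := eq_or_ne x x'
  · simp [hEunique, one_apply, Subsingleton.elim p.1 q.1]
  · simp [hEunique, hx]

theorem correlation_tfae [Unique Y] [Unique A] :
    [IsLocalCorrelation Γ, IsQCorrelation Γ, IsQCCorrelation Γ,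
      ∃ τ, IsDensityMatrix τ ∧ Γ = replacementChannel (1 ⊗ₖ τ)].TFAE := by
  tfae_have 1 → 4 := IsLocalCorrelation.exists_eq_replacementChannel
  tfae_have 4 → 1 := by
    rintro ⟨τ, hτ, rfl⟩
    exact isLocalCorrelation_replacementChannel isDensityMatrix_one hτ
  tfae_have 4 → 2 := by
    rintro ⟨τ, hτ, rfl⟩
    exact isQCorrelation_replacementChannel isDensityMatrix_one hτ
  tfae_have 2 → 3 := IsQCorrelation.isQCCorrelation
  tfae_have 3 → 4 := IsQCCorrelation.exists_eq_replacementChannel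
  tfae_finish

end Correlations

section Payoff

variable {V W R : Type*} [Fintype V] [Fintype W] [DecidableEq W] [Fintype R]

/-- The payoff `Tr((Γ ⊗ id)(ξ ξ*) P)` of a map `Γ` for the input vector `ξ ∈ ℂ^W ⊗ ℂ^R` and the test
operator `P`; the amplification `Γ ⊗ id` is written out entrywise. -/
noncomputable def payoff (ξ : W → R → ℂ) (P : Matrix (V × R) (V × R) ℂ)
    (Γ : Matrix W W ℂ →ₗ[ℂ] Matrix V V ℂ) : ℂ :=
  ((of fun p q : V × R => ∑ w, ∑ w',
    Γ (single w w' 1) p.1 q.1 * ξ w p.2 * starRingEnd ℂ (ξ w' q.2)) * P).trace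

/-- The value `ω_C(ξ, P)` of the game `(ξ, P)` over a class `C` of maps. The supremum is taken in
`ℝ`, over the payoffs that are real. -/
noncomputable def gameValue (ξ : W → R → ℂ) (P : Matrix (V × R) (V × R) ℂ)
    (C : (Matrix W W ℂ →ₗ[ℂ] Matrix V V ℂ) → Prop) : ℝ :=
  sSup {t : ℝ | ∃ Γ, C Γ ∧ (t : ℂ) = payoff ξ P Γ}

/-- The marginal of `ξ ξ*` on the reference space `ℂ^R`. -/
def referenceState (ξ : W → R → ℂ) : Matrix R R ℂ :=
  of fun r r' => ∑ w, ξ w r * starRingEnd ℂ (ξ w r')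

theorem payoff_replacementChannel (ξ : W → R → ℂ) (P : Matrix (V × R) (V × R) ℂ)
    (σ : Matrix V V ℂ) :
    payoff ξ P (replacementChannel σ) = (σ ⊗ₖ referenceState ξ * P).trace := by
  have hsingle (w w' : W) (v v' : V) :
      replacementChannel σ (single w w' 1) v v' = if w = w' then σ v v' else 0 := by
    rw [replacementChannel_single]
    split_ifs <;> rfl
  rw [payoff]
  congr 2
  ext p q
  simp [hsingle, referenceState, Finset.mul_sum, mul_assoc]

end Payoff

section DiagonalTest

variable {ι κ Y A : Type*} [Fintype ι] [DecidableEq ι] [Fintype κ]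
  [Unique Y] [Fintype Y] [Unique A] [Fintype A]

/-- The maximally entangled vector `|ι|^{-1/2} ∑ᵢ (eᵢ ⊗ e₁) ⊗ eᵢ`, with a one-element system `Y`
adjoined to its first leg. -/
noncomputable def maximallyEntangled : ι × Y → ι → ℂ :=
  fun w r => if w.1 = r then (√(Fintype.card ι))⁻¹ else 0

theorem referenceState_maximallyEntangled :
    referenceState (maximallyEntangled (ι := ι) (Y := Y)) = (1 / Fintype.card ι : ℂ) • 1 := by
  ext i j
  have hsq : ((√(Fintype.card ι) : ℂ))⁻¹ * (√(Fintype.card ι) : ℂ)⁻¹ = (Fintype.card ι : ℂ)⁻¹ := by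
    rw [← mul_inv, ← Complex.ofReal_mul, Real.mul_self_sqrt (Nat.cast_nonneg _),
      Complex.ofReal_natCast]
  obtain rfl | hij := eq_or_ne i j
  · simp [referenceState, maximallyEntangled, Fintype.sum_prod_type, hsq]
  · simp [referenceState, maximallyEntangled, Fintype.sum_prod_type, hij]

/-- The vector `∑ᵢ cᵢ (e₁ ⊗ eᵢ) ⊗ eᵢ` with diagonal coefficients `c`. -/
def diagonalVector (c : ι → ℂ) : (A × ι) × ι → ℂ :=
  fun p => if p.1.2 = p.2 then c p.2 else 0

/-- The test operator `∑ₖ γₖ γₖ*` built from the vectors with diagonal coefficients `γ k`; it is a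
projection when these are orthonormal. -/
def diagonalTest (γ : κ → ι → ℂ) : Matrix ((A × ι) × ι) ((A × ι) × ι) ℂ :=
  ∑ k, vecMulVec (diagonalVector (γ k)) (star (diagonalVector (γ k)))

theorem star_diagonalVector_dotProduct_mulVec (τ : Matrix ι ι ℂ) (c : ι → ℂ) :
    star (diagonalVector (A := A) c) ⬝ᵥ
        (((1 : Matrix A A ℂ) ⊗ₖ τ) ⊗ₖ (1 : Matrix ι ι ℂ)) *ᵥ diagonalVector c
      = ∑ i, τ i i * (‖c i‖ ^ 2 : ℝ) := by
  simp [dotProduct, mulVec, diagonalVector, Fintype.sum_prod_type, one_apply, apply_ite,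
    ← Complex.conj_mul', mul_left_comm]

variable [DecidableEq Y]

theorem payoff_maximallyEntangled_diagonalTest (γ : κ → ι → ℂ) (τ : Matrix ι ι ℂ) :
    payoff maximallyEntangled (diagonalTest γ)
        (replacementChannel (X := ι × Y) ((1 : Matrix A A ℂ) ⊗ₖ τ))
      = (1 / Fintype.card ι : ℂ) * ∑ i, τ i i * ((∑ k, ‖γ k i‖ ^ 2 : ℝ) : ℂ) := by
  rw [payoff_replacementChannel, referenceState_maximallyEntangled, kronecker_smul, smul_mul,
    trace_smul, smul_eq_mul, diagonalTest, Finset.mul_sum, trace_sum]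
  simp only [mul_vecMulVec, trace_vecMulVec, dotProduct_comm _ (star _),
    star_diagonalVector_dotProduct_mulVec, Complex.ofReal_sum, Finset.mul_sum]
  rw [Finset.sum_comm]

theorem isGreatest_payoff [Nonempty ι] (γ : κ → ι → ℂ) :
    IsGreatest {t : ℝ | ∃ τ, IsDensityMatrix τ ∧ (t : ℂ) =
        payoff maximallyEntangled (diagonalTest γ)
          (replacementChannel (X := ι × Y) ((1 : Matrix A A ℂ) ⊗ₖ τ))}
      ((1 / (Fintype.card ι : ℝ)) * ⨆ i, ∑ k, ‖γ k i‖ ^ 2) := by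
  simp only [payoff_maximallyEntangled_diagonalTest]
  constructor
  · obtain ⟨i, hi⟩ := exists_eq_ciSup_of_finite (f := fun i => ∑ k, ‖γ k i‖ ^ 2)
    refine ⟨single i i 1, isDensityMatrix_single i, ?_⟩
    simp [← hi, ← diagonal_single, Pi.single_apply]
  · rintro t ⟨τ, hτ, ht⟩
    have hle : ∑ i, τ i i * ((∑ k, ‖γ k i‖ ^ 2 : ℝ) : ℂ) ≤ (⨆ i, ∑ k, ‖γ k i‖ ^ 2 : ℝ) :=
      hτ.sum_diag_mul_le fun i => le_ciSup (Set.finite_range fun i => ∑ k, ‖γ k i‖ ^ 2).bddAbove i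
    rw [← Complex.real_le_real, ht, Complex.ofReal_mul, Complex.ofReal_div, Complex.ofReal_one,
      Complex.ofReal_natCast]
    gcongr

theorem gameValue_eq_of_forall_iff [Nonempty ι] (γ : κ → ι → ℂ)
    {C : (Matrix (ι × Y) (ι × Y) ℂ →ₗ[ℂ] Matrix (A × ι) (A × ι) ℂ) → Prop}
    (hC : ∀ Γ, C Γ ↔ ∃ τ, IsDensityMatrix τ ∧ Γ = replacementChannel (1 ⊗ₖ τ)) :
    gameValue maximallyEntangled (diagonalTest γ) C
      = (1 / (Fintype.card ι : ℝ)) * ⨆ i, ∑ k, ‖γ k i‖ ^ 2 := by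
  rw [gameValue, ← (isGreatest_payoff (Y := Y) (A := A) γ).csSup_eq]
  congr! 3 with t
  constructor
  · rintro ⟨Γ, hΓ, ht⟩
    obtain ⟨τ, hτ, rfl⟩ := (hC Γ).mp hΓ
    exact ⟨τ, hτ, ht⟩
  · rintro ⟨τ, hτ, ht⟩
    exact ⟨_, (hC _).mpr ⟨τ, hτ, rfl⟩, ht⟩

theorem sum_conjTranspose_diagonal_mul_diagonal (γ : κ → ι → ℂ) :
    ∑ k, (diagonal (γ k))ᴴ * diagonal (γ k) = diagonal fun i => ((∑ k, ‖γ k i‖ ^ 2 : ℝ) : ℂ) := by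
  ext i j
  simp [diagonal_apply, Matrix.sum_apply, Complex.conj_mul']

theorem norm_toEuclideanCLM_diagonal_ofReal [Nonempty ι] {g : ι → ℝ} (hg : ∀ i, 0 ≤ g i) :
    ‖toEuclideanCLM (𝕜 := ℂ) (diagonal fun i => (g i : ℂ))‖ = ⨆ i, g i := by
  have hnorm (i : ι) : ‖(g i : ℂ)‖ = g i := by rw [Complex.norm_real, Real.norm_of_nonneg (hg i)]
  have hle : ∀ i, g i ≤ ⨆ i, g i := le_ciSup (Set.finite_range g).bddAbove
  calc ‖toEuclideanCLM (𝕜 := ℂ) (diagonal fun i => (g i : ℂ))‖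
      = ‖fun i => (g i : ℂ)‖ := l2_opNorm_diagonal _
    _ = ⨆ i, g i := le_antisymm
      ((pi_norm_le_iff_of_nonempty _).mpr fun i => (hnorm i).trans_le (hle i))
      (ciSup_le fun i => (hnorm i).ge.trans (norm_le_pi_norm (fun i => (g i : ℂ)) i))

end DiagonalTest

theorem statement19_general {ι κ Y A : Type} [Fintype ι] [DecidableEq ι] [Nonempty ι] [Fintype κ]
    [Unique Y] [Fintype Y] [DecidableEq Y] [Unique A] [Fintype A] (γ : κ → ι → ℂ) :
    gameValue (maximallyEntangled (Y := Y)) (diagonalTest (A := A) γ) IsLocalCorrelation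
        = (1 / (Fintype.card ι : ℝ)) * ⨆ i, ∑ k, ‖γ k i‖ ^ 2 ∧
    gameValue (maximallyEntangled (Y := Y)) (diagonalTest (A := A) γ) IsQCorrelation
        = (1 / (Fintype.card ι : ℝ)) * ⨆ i, ∑ k, ‖γ k i‖ ^ 2 ∧
    gameValue (maximallyEntangled (Y := Y)) (diagonalTest (A := A) γ) IsQCCorrelation
        = (1 / (Fintype.card ι : ℝ)) * ⨆ i, ∑ k, ‖γ k i‖ ^ 2 ∧
    (1 / (Fintype.card ι : ℝ)) * ⨆ i, ∑ k, ‖γ k i‖ ^ 2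
        = (1 / (Fintype.card ι : ℝ)) *
          ‖toEuclideanCLM (𝕜 := ℂ) (∑ k, (diagonal (γ k))ᴴ * diagonal (γ k))‖ := by
  have htfae (Γ : Matrix (ι × Y) (ι × Y) ℂ →ₗ[ℂ] Matrix (A × ι) (A × ι) ℂ) :=
    correlation_tfae (Γ := Γ)
  refine ⟨gameValue_eq_of_forall_iff γ fun Γ => (htfae Γ).out 0 3,
    gameValue_eq_of_forall_iff γ fun Γ => (htfae Γ).out 1 3,
    gameValue_eq_of_forall_iff γ fun Γ => (htfae Γ).out 2 3, ?_⟩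
  rw [sum_conjTranspose_diagonal_mul_diagonal, norm_toEuclideanCLM_diagonal_ofReal]
  exact fun i => by positivity

/-- For the finite rank quantum game of Subsection 5.2, the local,
quantum and quantum commuting values all coincide and equal
`(1/n) · max_i Σ_k |γ_{k,i}|² = (1/n) ‖Σ_k D_k* D_k‖`. -/
theorem statement19
    (n m : ℕ) (hn : 1 ≤ n) (hm : 1 ≤ m)
    (γ : Fin m → Fin n → ℂ)
    (hγ : ∀ k l : Fin m,
      ∑ i, (starRingEnd ℂ) (γ k i) * γ l i = if k = l then 1 else 0)
    (ξc : Fin n × Unit → Fin n → ℂ)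
    (hξc : ∀ w r, ξc w r = if w.1 = r then ((Real.sqrt n)⁻¹ : ℂ) else 0)
    (γc : Fin m → (Unit × Fin n) × Fin n → ℂ)
    (hγc : ∀ k pr, γc k pr = if pr.1.2 = pr.2 then γ k pr.2 else 0)
    (Pm : Matrix ((Unit × Fin n) × Fin n) ((Unit × Fin n) × Fin n) ℂ)
    (hPm : Pm = Matrix.of fun p q => ∑ k, γc k p * (starRingEnd ℂ) (γc k q))
    (val : (Matrix ((Fin n × Unit)) ((Fin n × Unit)) ℂ →ₗ[ℂ]
        Matrix (Unit × Fin n) (Unit × Fin n) ℂ) → ℂ)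
    (hval : ∀ Γ, val Γ = Matrix.trace
      ((Matrix.of fun (pr qr : (Unit × Fin n) × Fin n) =>
          ∑ w : Fin n × Unit, ∑ w' : Fin n × Unit,
            (Γ (Matrix.single w w' (1 : ℂ))) pr.1 qr.1
              * ξc w pr.2 * (starRingEnd ℂ) (ξc w' qr.2)) * Pm))
    (D : Fin m → Matrix (Fin n) (Fin n) ℂ)
    (hD : ∀ k, D k = Matrix.diagonal (γ k)) :
    sSup {t : ℝ | ∃ Γ, IsLocalCorrelation Γ ∧ (t : ℂ) = val Γ}
        = (1 / (n : ℝ)) * ⨆ i : Fin n, ∑ k, ‖γ k i‖ ^ 2 ∧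
    sSup {t : ℝ | ∃ Γ, IsQCorrelation Γ ∧ (t : ℂ) = val Γ}
        = (1 / (n : ℝ)) * ⨆ i : Fin n, ∑ k, ‖γ k i‖ ^ 2 ∧
    sSup {t : ℝ | ∃ Γ, IsQCCorrelation Γ ∧ (t : ℂ) = val Γ}
        = (1 / (n : ℝ)) * ⨆ i : Fin n, ∑ k, ‖γ k i‖ ^ 2 ∧
    (1 / (n : ℝ)) * ⨆ i : Fin n, ∑ k, ‖γ k i‖ ^ 2
        = (1 / (n : ℝ)) * ‖Matrix.toEuclideanCLM (𝕜 := ℂ) (∑ k, (D k)ᴴ * D k)‖ := by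
  have : Nonempty (Fin n) := ⟨⟨0, hn⟩⟩
  obtain rfl : ξc = maximallyEntangled := by
    ext w r
    simp [hξc, maximallyEntangled]
  obtain rfl : γc = fun k => diagonalVector (γ k) := by
    ext k p
    exact hγc k p
  obtain rfl : Pm = diagonalTest γ := by
    ext p q
    simp [hPm, diagonalTest, Matrix.sum_apply, vecMulVec_apply]
  obtain rfl : val = payoff maximallyEntangled (diagonalTest γ) := funext hval
  obtain rfl : D = fun k => diagonal (γ k) := funext hD
  simpa only [gameValue, Fintype.card_fin] using statement19_general (Y := Unit) (A := Unit) γ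
end
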